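/- Fractional ε-Poincaré inequality. Let d ≥ 2, s ∈ (0,1], and let γ satisfy −d < γ + 2s ≤ 0. Let q satisfy d/(d+2s+γ) < q < d/(d+γ), and set ν := (d − q(d+γ))/(2q) ∈ (0,s). Then there exists C₀ > 0, depending only on d, γ, s, q, such that for every ε > 0, every nonnegative measurable g with ‖g‖_{L¹} < ∞ and ‖⟨·⟩^{|γ|} g‖_{L^q} < ∞, and every Schwartz function φ, one has ∫_{ℝ^d} φ(v)² c_γ[g](v) dv ≤ ε ‖⟨·⟩^{γ/2} φ‖_{Ḣ^s}² + C₀ ( ‖g‖_{L¹} + ε^{−ν/(s−ν)} ‖⟨·⟩^{|γ|} g‖_{L^q}^{s/(s−ν)} ) ∫_{ℝ^d} φ(v)² ⟨v⟩^γ dv. -/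

import Mathlib

/-!
Put `F = ⟨·⟩^{γ/2} φ` and `G = ⟨·⟩^{|γ|} g`. Splitting the kernel according to whether
`|v - y| ≥ ⟨v⟩/2` (`kernel_le`) moves the weight onto `g` and gives
`φ² c_γ[g] ≤ 2^{|γ|} F² (‖g‖_{L¹} + W)` with `W = |·|^γ * G`. What remains is a form bound for the
potential `W` with respect to `‖F‖²_{Ḣ^s}`, with an arbitrarily small coefficient.

The bound uses neither Sobolev embedding nor interpolation. Hölder's inequality on a unit ball and
scaling show that `W` has the Morrey property `∫_{B(y,r)} W ≤ C ‖G‖_{L^q} r^{d - 2ν}`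
(`exists_morrey`). Expanding `F` as its mean over `B(x,r)` plus the telescoping sum of the
differences of its means over `B(x, r 2^{-k})`, one has

* each mean is controlled by Jensen's inequality and, after integration against `W`, by the mass of
  `W` on balls of the same radius;
* each difference of means is controlled by the increments `F(b + h) - F(b)` with `|h| < 2 r 2^{-k}`,
  whose `L²` norm is at most `2 |h|^s ‖F‖_{Ḣ^s}` by Plancherel (`lintegral_translate_sub_le`).

As `ν < s` the series of the resulting bounds is geometric, so
`∫ F² W ≤ K ‖G‖_{L^q} (r^{2(s-ν)} ‖F‖²_{Ḣ^s} + r^{-2ν} ‖F‖²_{L²})` for every `r > 0`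
(`exists_weighted_bound`). Choosing `r` so that the first coefficient equals `ε` gives the theorem.
-/

noncomputable section

open MeasureTheory Real Filter
open scoped InnerProductSpace

/-- `ℝ^d`. -/
abbrev Vd (d : ℕ) := EuclideanSpace ℝ (Fin d)

/-- Japanese bracket `⟨v⟩ = (1+|v|²)^{1/2}`. -/
def jap {d : ℕ} (v : Vd d) : ℝ := Real.sqrt (1 + ‖v‖ ^ 2)

/-- Surface measure on the unit sphere of `ℝ^d` (as a measure on `ℝ^d`). -/
def sphereMeasure (d : ℕ) : Measure (Vd d) :=
  (μH[(d : ℝ) - 1]).restrict (Metric.sphere (0 : Vd d) 1)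

/-- `cos θ = (u/|u|)·σ` with `u = v - v*`. -/
def costh {d : ℕ} (v vs σ : Vd d) : ℝ := ⟪‖v - vs‖⁻¹ • (v - vs), σ⟫_ℝ

/-- Post-collisional velocity `v' = v - (u - |u|σ)/2`. -/
def vpost {d : ℕ} (v vs σ : Vd d) : Vd d := v - (2:ℝ)⁻¹ • ((v - vs) - ‖v - vs‖ • σ)

/-- Post-collisional velocity `v*' = v* + (u - |u|σ)/2`. -/
def vpostStar {d : ℕ} (v vs σ : Vd d) : Vd d := vs + (2:ℝ)⁻¹ • ((v - vs) - ‖v - vs‖ • σ)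

/-- Collision kernel `B(v-v*,σ) = |v-v*|^γ b(cos θ)`. -/
def Bker {d : ℕ} (γ : ℝ) (b : ℝ → ℝ) (v vs σ : Vd d) : ℝ :=
  ‖v - vs‖ ^ γ * b (costh v vs σ)

/-- Boltzmann collision operator. -/
def Qop {d : ℕ} (γ : ℝ) (b : ℝ → ℝ) (g f : Vd d → ℝ) (v : Vd d) : ℝ :=
  ∫ vs, ∫ σ, (g (vpostStar v vs σ) * f (vpost v vs σ) - g vs * f v) * Bker γ b v vs σ
    ∂(sphereMeasure d)

/-- Non-cutoff very soft potential assumptions on the kernel. -/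
structure KernelAssumptions (d : ℕ) (γ s : ℝ) (b : ℝ → ℝ) : Prop where
  b_nonneg : ∀ x, 0 ≤ b x
  noncutoff : ∃ b₀ > 0, Filter.Tendsto
    (fun θ : ℝ => Real.sin θ ^ ((d : ℝ) - 2) * b (Real.cos θ) * θ ^ (1 + 2*s))
    (nhdsWithin 0 (Set.Ioi 0)) (nhds b₀)
  angInt : IntegrableOn (fun θ : ℝ => b (Real.cos θ) * Real.sin θ ^ d) (Set.Ioo 0 π)
  s_pos : 0 < s
  s_lt_one : s < 1
  verySoft : γ + 2*s < 0
  gammaLB : max (-4) (-(d:ℝ)) < γ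

/-- The class `𝒴(ρ,E,H)`. -/
def memY {d : ℕ} (ρ E H : ℝ) (g : Vd d → ℝ) : Prop :=
  (∀ v, 0 ≤ g v) ∧ Integrable g ∧ Integrable (fun v => g v * jap v ^ (2:ℝ)) ∧
  ρ ≤ (∫ v, g v) ∧ (∫ v, g v * jap v ^ (2:ℝ)) ≤ E ∧ (∫ v, g v * Real.log (g v)) ≤ H

/-- Classical solution of the Boltzmann equation on the time set `I`, with initial
datum `fin`: nonnegative, smooth, all appearing (collision) integrals finite,
satisfying the equation pointwise. -/
structure IsClassicalSolution {d : ℕ} (γ : ℝ) (b : ℝ → ℝ) (I : Set ℝ)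
    (fin : Vd d → ℝ) (f : ℝ → Vd d → ℝ) : Prop where
  nonneg : ∀ t v, 0 ≤ f t v
  smooth : ∀ n : ℕ, ContDiff ℝ n (Function.uncurry f)
  collInt : ∀ t ∈ I, ∀ v : Vd d, Integrable
    (fun q : Vd d × Vd d =>
      (f t (vpostStar v q.1 q.2) * f t (vpost v q.1 q.2) - f t q.1 * f t v) * Bker γ b v q.1 q.2)
    (volume.prod (sphereMeasure d))
  eqn : ∀ t ∈ I, ∀ v, HasDerivAt (fun τ => f τ v) (Qop γ b (f t) (f t) v) t
  init : ∀ v, f 0 v = fin v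

/-- Weighted Lebesgue norm `‖f‖_{L^p_k}`. -/
def wLp {d : ℕ} (p k : ℝ) (f : Vd d → ℝ) : ℝ :=
  (∫ v, |f v| ^ p * jap v ^ k) ^ (1/p)

/-- Statistical moment `m_k(f)`. -/
def mom {d : ℕ} (k : ℝ) (f : Vd d → ℝ) : ℝ := ∫ v, f v * jap v ^ k

/-- `c_α[g](v) = ∫ |v - v*|^α g(v*) dv*`. -/
def cop {d : ℕ} (α : ℝ) (g : Vd d → ℝ) (v : Vd d) : ℝ := ∫ vs, ‖v - vs‖ ^ α * g vs

/-- The dissipation functional `𝒟_α[G,F]`. -/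
def Ddiss {d : ℕ} (α : ℝ) (b : ℝ → ℝ) (G F : Vd d → ℝ) : ℝ :=
  ∫ v, ∫ vs, ∫ σ, ‖v - vs‖ ^ α * b (costh v vs σ) * G vs * (F (vpost v vs σ) - F v) ^ 2
    ∂(sphereMeasure d)

/-- Fourier transform `ĝ(ξ) = ∫ e^{-i x·ξ} g(x) dx`. -/
def fourierT {d : ℕ} (g : Vd d → ℝ) (ξ : Vd d) : ℂ :=
  ∫ x, Complex.exp (-(Complex.I * ((⟪x, ξ⟫_ℝ : ℝ) : ℂ))) * (g x : ℂ)

/-- Squared homogeneous Sobolev norm `‖g‖²_{Ḣ^s}`. -/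
def sobSemiSq {d : ℕ} (s : ℝ) (g : Vd d → ℝ) : ℝ :=
  ∫ ξ, ‖fourierT g ξ‖ ^ 2 * ‖ξ‖ ^ (2*s)

/-- Squared inhomogeneous Sobolev norm `‖g‖²_{H^s} = ‖g‖²_{Ḣ^s} + ‖g‖²_{L²}`. -/
def sobSq {d : ℕ} (s : ℝ) (g : Vd d → ℝ) : ℝ := sobSemiSq s g + ∫ v, (g v) ^ 2

/-! ### The `Ḣ^s` seminorm and translations -/

/-- Interpolation between `|e^{iθ} - 1| ≤ |θ|` and `|e^{iθ} - 1| ≤ 2`. -/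
lemma norm_exp_sub_one_sq_le {s : ℝ} (hs : 0 < s) (hs1 : s ≤ 1) (θ : ℝ) :
    ‖Complex.exp (Complex.I * θ) - 1‖ ^ 2 ≤ 4 * |θ| ^ (2 * s) := by
  rcases le_total |θ| 1 with h | h
  · have h1 : ‖Complex.exp (Complex.I * θ) - 1‖ ≤ |θ| := by
      simpa using Real.norm_exp_I_mul_ofReal_sub_one_le (x := θ)
    rcases (abs_nonneg θ).eq_or_lt with h0 | h0
    · have : ‖Complex.exp (Complex.I * θ) - 1‖ = 0 := le_antisymm (h0 ▸ h1) (norm_nonneg _)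
      rw [this, zero_pow two_ne_zero]; positivity
    have h2 : |θ| ^ (2:ℝ) ≤ |θ| ^ (2 * s) :=
      Real.rpow_le_rpow_of_exponent_ge h0 h (by linarith)
    rw [Real.rpow_two] at h2
    have h3 : 0 ≤ |θ| ^ (2 * s) := by positivity
    nlinarith [norm_nonneg (Complex.exp (Complex.I * θ) - 1)]
  · have h1 : ‖Complex.exp (Complex.I * θ) - 1‖ ≤ 2 := by
      refine (norm_sub_le _ _).trans ?_
      rw [mul_comm, Complex.norm_exp_ofReal_mul_I]; norm_num
    have h2 : (1:ℝ) ≤ |θ| ^ (2 * s) := Real.one_le_rpow h (by linarith)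
    nlinarith [norm_nonneg (Complex.exp (Complex.I * θ) - 1)]

open FourierTransform in
/-- `fourierT` has no `2π` in the phase, Mathlib's `𝓕` does. -/
lemma fourierT_eq {d : ℕ} (f : Vd d → ℝ) (η : Vd d) :
    fourierT f ((2 * π) • η) = 𝓕 (fun x => (f x : ℂ)) η := by
  rw [Real.fourier_eq', fourierT]
  congr 1; ext x
  rw [smul_eq_mul, inner_smul_right]
  congr 2
  push_cast; ring

open FourierTransform in
/-- In Mathlib's normalisation `𝓕 f ξ = ∫ exp (-2πi⟪x, ξ⟫) f x`, dilating by `2π` gives the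
seminorm up to powers of `2π`. -/
lemma sobSemiSq_eq {d : ℕ} {s : ℝ} (f : Vd d → ℝ) :
    sobSemiSq s f = (2 * π) ^ d *
      ∫ η, ‖𝓕 (fun x => (f x : ℂ)) η‖ ^ 2 * (2 * π * ‖η‖) ^ (2 * s) := by
  have h := Measure.integral_comp_smul (volume : Measure (Vd d))
    (fun ξ : Vd d => ‖fourierT f ξ‖ ^ 2 * ‖ξ‖ ^ (2*s)) (2 * π)
  have hp : (0:ℝ) < 2 * π := by positivity
  simp only [fourierT_eq, norm_smul, Real.norm_eq_abs, abs_of_pos hp, finrank_euclideanSpace,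
    Fintype.card_fin, smul_eq_mul, abs_of_pos (inv_pos.2 (pow_pos hp d))] at h
  rw [h, sobSemiSq, ← mul_assoc, mul_inv_cancel₀ (by positivity), one_mul]

open FourierTransform in
/-- Translation estimate: by Plancherel, `‖F(· + h) - F‖²_{L²} ≤ 4 |h|^{2s} ‖F‖²_{Ḣ^s}`. -/
lemma lintegral_translate_sub_le {d : ℕ} {s : ℝ} (hs : 0 < s) (hs1 : s ≤ 1)
    (F : SchwartzMap (Vd d) ℝ) (h : Vd d) :
    ∫⁻ x, ‖F (x + h) - F x‖ₑ ^ 2 ≤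
      ENNReal.ofReal (4 * sobSemiSq s F) * ENNReal.ofReal (‖h‖ ^ (2 * s)) := by
  set f : SchwartzMap (Vd d) ℂ := F.postcompCLM Complex.ofRealCLM with hf
  set D : SchwartzMap (Vd d) ℂ := f.compSubConstCLM ℂ (-h) - f with hD
  have hDx : ∀ x, ‖D x‖ ^ 2 = ‖F (x + h) - F x‖ ^ 2 := by
    intro x
    simp only [hD, hf, sub_apply, SchwartzMap.compSubConstCLM_apply,
      SchwartzMap.postcompCLM_apply, sub_neg_eq_add, Complex.ofRealCLM_apply]
    rw [← Complex.ofReal_sub, Complex.norm_real]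
  have hfc : 𝓕 (f : Vd d → ℂ) = 𝓕 (fun x => (F x : ℂ)) := rfl
  have hDF : ∀ η, 𝓕 D η = (Complex.exp (Complex.I * (2 * π * inner ℝ h η : ℝ)) - 1) * 𝓕 f η := by
    intro η
    have e1 : 𝓕 (f.compSubConstCLM ℂ (-h)) η =
        Complex.exp (Complex.I * (2 * π * inner ℝ h η : ℝ)) * 𝓕 f η := by
      have := congrFun (VectorFourier.fourierIntegral_comp_add_right Real.fourierChar
        (volume : Measure (Vd d)) (innerₗ (Vd d)) (f : Vd d → ℂ) h) η
      rw [SchwartzMap.fourier_coe, SchwartzMap.fourier_coe]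
      refine Eq.trans ?_ (this.trans ?_)
      · rw [Real.fourier_eq]
        simp only [VectorFourier.fourierIntegral]
        congr 1; ext x
        simp [SchwartzMap.compSubConstCLM_apply]
      · rw [Circle.smul_def, Real.fourierChar_apply, smul_eq_mul, Real.fourier_eq]
        simp only [VectorFourier.fourierIntegral, innerₗ_apply_apply]
        congr 2
        ring
    rw [hD, ← fourierCLM_apply (R := ℂ), map_sub, sub_apply, fourierCLM_apply, fourierCLM_apply, e1]
    ring
  have hint : Integrable (fun x => ‖D x‖ ^ 2) := by
    simpa using (D.memLp 2 volume).integrable_norm_pow (by norm_num)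
  have hint2 : Integrable (fun η => ‖𝓕 f η‖ ^ 2 * (2 * π * ‖η‖) ^ (2 * s)) := by
    have i1 : Integrable (fun η => ‖𝓕 f η‖ ^ 2) := by
      simpa using ((𝓕 f).memLp 2 volume).integrable_norm_pow (by norm_num)
    have i2 : Integrable (fun η => ‖η‖ ^ 2 * ‖𝓕 f η‖) := (𝓕 f).integrable_pow_mul volume 2
    obtain ⟨C, hC⟩ := (𝓕 f).decay 0 0
    have hC' : ∀ x, ‖𝓕 f x‖ ≤ C := by simpa using hC.2
    refine Integrable.mono' (g := fun η => (2 * π) ^ (2*s) * (‖𝓕 f η‖ ^ 2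
      + C * (‖η‖ ^ 2 * ‖𝓕 f η‖))) ((i1.add (i2.const_mul C)).const_mul _) ?_ ?_
    · refine Measurable.aestronglyMeasurable ?_
      have := (𝓕 f).continuous.measurable
      fun_prop
    · refine Filter.Eventually.of_forall fun η => ?_
      rw [Real.norm_of_nonneg (by positivity), Real.mul_rpow (by positivity) (norm_nonneg _)]
      have : ‖η‖ ^ (2 * s) ≤ 1 + ‖η‖ ^ 2 := by
        rcases le_total ‖η‖ 1 with h | h
        · have := Real.rpow_le_one (norm_nonneg η) h (z := 2 * s) (by linarith)
          nlinarith [sq_nonneg ‖η‖]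
        · have := Real.rpow_le_rpow_of_exponent_le h (show 2 * s ≤ 2 by linarith)
          rw [Real.rpow_two] at this
          linarith
      calc ‖𝓕 f η‖ ^ 2 * ((2 * π) ^ (2*s) * ‖η‖ ^ (2 * s))
          ≤ ‖𝓕 f η‖ ^ 2 * ((2 * π) ^ (2*s) * (1 + ‖η‖ ^ 2)) := by gcongr
        _ = (2 * π) ^ (2*s) * (‖𝓕 f η‖ ^ 2 + ‖𝓕 f η‖ * (‖η‖ ^ 2 * ‖𝓕 f η‖)) := by ring
        _ ≤ _ := by gcongr; exact hC' η
  have key : ∫ x, ‖D x‖ ^ 2 ≤ 4 * sobSemiSq s F * ‖h‖ ^ (2 * s) := by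
    rw [← SchwartzMap.integral_norm_sq_fourier D]
    have hpt : ∀ η, ‖𝓕 D η‖ ^ 2 ≤
        (4 * ‖h‖ ^ (2 * s)) * (‖𝓕 f η‖ ^ 2 * (2 * π * ‖η‖) ^ (2 * s)) := by
      intro η
      rw [hDF, norm_mul, mul_pow]
      have h1 := norm_exp_sub_one_sq_le hs hs1 (2 * π * inner ℝ h η)
      have h2 : |2 * π * inner ℝ h η| ^ (2 * s) ≤ ‖h‖ ^ (2 * s) * (2 * π * ‖η‖) ^ (2 * s) := by
        rw [← Real.mul_rpow (by positivity) (by positivity)]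
        refine Real.rpow_le_rpow (abs_nonneg _) ?_ (by linarith)
        rw [abs_mul, abs_of_pos (by positivity : (0:ℝ) < 2 * π)]
        have := abs_real_inner_le_norm h η
        calc 2 * π * |inner ℝ h η| ≤ 2 * π * (‖h‖ * ‖η‖) := by gcongr
          _ = _ := by ring
      calc _ ≤ (4 * (‖h‖ ^ (2 * s) * (2 * π * ‖η‖) ^ (2 * s))) * ‖𝓕 f η‖ ^ 2 := by
            gcongr; linarith
        _ = _ := by ring
    have hle := integral_mono_of_nonneg (Filter.Eventually.of_forall fun η => by positivity)
      (hint2.const_mul (4 * ‖h‖ ^ (2 * s))) (Filter.Eventually.of_forall hpt)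
    -- The factor `(2π)^d ≥ 1` coming from the change of normalisation is discarded.
    refine hle.trans ?_
    rw [integral_const_mul, sobSemiSq_eq]
    have h1 : (1:ℝ) ≤ (2 * π) ^ d := one_le_pow₀ (by nlinarith [Real.pi_gt_three])
    have h2 : 0 ≤ ∫ η, ‖𝓕 f η‖ ^ 2 * (2 * π * ‖η‖) ^ (2 * s) :=
      integral_nonneg fun η => by positivity
    rw [SchwartzMap.fourier_coe, hfc] at *
    have h3 : 0 ≤ 4 * ‖h‖ ^ (2 * s) := by positivity
    nlinarith [mul_nonneg (mul_nonneg h3 h2) (sub_nonneg.2 h1)]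
  rw [← ENNReal.ofReal_mul' (by positivity)]
  refine le_trans (le_of_eq ?_) (ENNReal.ofReal_le_ofReal key)
  rw [ofReal_integral_eq_lintegral_ofReal hint (Filter.Eventually.of_forall fun x => by positivity)]
  refine lintegral_congr fun x => ?_
  rw [hDx, ENNReal.ofReal_pow (norm_nonneg _), ofReal_norm]

/-! ### Morrey bound for the potential -/

open scoped ENNReal

/-- The Riesz-type potential `∫ |x - y|^γ G(y) dy`, as an extended nonnegative number. -/
def pot {d : ℕ} (γ : ℝ) (G : Vd d → ℝ≥0∞) (x : Vd d) : ℝ≥0∞ :=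
  ∫⁻ y, ENNReal.ofReal (‖x - y‖ ^ γ) * G y

lemma measurable_pot {d : ℕ} (γ : ℝ) {G : Vd d → ℝ≥0∞} (hG : Measurable G) :
    Measurable (pot γ G) := by
  unfold pot
  exact Measurable.lintegral_prod_right (by fun_prop)

/-- Change of variables `x = y₀ + r z`. -/
lemma lintegral_affine {d : ℕ} {f : Vd d → ℝ≥0∞} (hf : Measurable f) (y₀ : Vd d) {r : ℝ}
    (hr : 0 < r) : ∫⁻ x, f x = ENNReal.ofReal (r ^ d) * ∫⁻ z, f (y₀ + r • z) := by
  have h1 : ∫⁻ z, f (y₀ + r • z) = ∫⁻ w, f (y₀ + w) ∂(Measure.map (r • ·) volume) := by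
    rw [lintegral_map (by fun_prop) (by fun_prop)]
  rw [h1, Measure.map_addHaar_smul _ hr.ne', lintegral_smul_measure,
    lintegral_add_left_eq_self, finrank_euclideanSpace, Fintype.card_fin, smul_eq_mul, ← mul_assoc,
    ← ENNReal.ofReal_mul (by positivity), abs_of_pos (by positivity),
    mul_inv_cancel₀ (by positivity), ENNReal.ofReal_one, one_mul]

lemma lintegral_ball_rpow_lt_top {d : ℕ} (hd : 1 ≤ d) {γ : ℝ} (hγ : -(d:ℝ) < γ) (R : ℝ) :
    ∫⁻ u in Metric.ball (0 : Vd d) R, ENNReal.ofReal (‖u‖ ^ γ) < ⊤ := by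
  have : Nontrivial (Vd d) := Module.nontrivial_of_finrank_pos (R := ℝ) (by simp; omega)
  have hi : IntegrableOn (fun x : Vd d => ‖x‖ ^ γ) (Metric.ball 0 R) := by
    rw [integrableOn_fun_norm_addHaar volume (f := fun t => t ^ γ)]
    rw [finrank_euclideanSpace, Fintype.card_fin]
    rcases le_or_gt R 0 with hR | hR
    · simp [Set.Ioo_eq_empty (not_lt.2 hR)]
    have h1 : IntegrableOn (fun y : ℝ => y ^ ((d:ℝ) - 1 + γ)) (Set.Ioo 0 R) :=
      (intervalIntegral.integrableOn_Ioo_rpow_iff hR).2 (by linarith)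
    refine h1.congr_fun (fun y hy => ?_) measurableSet_Ioo
    simp only [smul_eq_mul]
    rw [Real.rpow_add hy.1, ← Real.rpow_natCast, Nat.cast_sub hd, Nat.cast_one]
  have := hi.lintegral_lt_top
  exact this

/-- On the unit ball, the averaged kernel has the decay of `(1 + |z|)^γ`. -/
lemma exists_ball_kernel_bound {d : ℕ} (hd : 1 ≤ d) {γ : ℝ} (hγ : -(d:ℝ) < γ) (hγ0 : γ ≤ 0) :
    ∃ C : ℝ≥0∞, C ≠ ⊤ ∧ ∀ z : Vd d,
      ∫⁻ x in Metric.ball (0 : Vd d) 1, ENNReal.ofReal (‖x - z‖ ^ γ) ≤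
        C * ENNReal.ofReal ((1 + ‖z‖) ^ γ) := by
  set I := ∫⁻ u in Metric.ball (0 : Vd d) 3, ENNReal.ofReal (‖u‖ ^ γ) with hI
  have hIt : I ≠ ⊤ := (lintegral_ball_rpow_lt_top hd hγ 3).ne
  set V := volume (Metric.ball (0 : Vd d) 1) with hV
  have hVt : V ≠ ⊤ := measure_ball_lt_top.ne
  refine ⟨I * ENNReal.ofReal (3 ^ (-γ)) + V * ENNReal.ofReal (4 ^ (-γ)), by finiteness, ?_⟩
  intro z
  rw [add_mul]
  rcases lt_or_ge ‖z‖ 2 with h | h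
  · refine le_trans ?_ le_self_add
    have h1 : ∫⁻ x in Metric.ball (0 : Vd d) 1, ENNReal.ofReal (‖x - z‖ ^ γ) ≤ I := by
      rw [hI, ← lintegral_indicator measurableSet_ball, ← lintegral_indicator measurableSet_ball,
        ← lintegral_sub_right_eq_self ((Metric.ball (0 : Vd d) 3).indicator _) z]
      refine lintegral_mono fun x => ?_
      by_cases hx : x ∈ Metric.ball (0 : Vd d) 1
      · have : x - z ∈ Metric.ball (0 : Vd d) 3 := by
          rw [mem_ball_zero_iff] at *
          linarith [norm_sub_le x z]
        rw [Set.indicator_of_mem hx, Set.indicator_of_mem this]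
      · rw [Set.indicator_of_notMem hx]; exact zero_le
    refine h1.trans ?_
    rw [mul_assoc, ← ENNReal.ofReal_mul (by positivity)]
    refine le_mul_of_one_le_right zero_le ?_
    rw [ENNReal.one_le_ofReal, Real.rpow_neg (by norm_num), ← div_eq_inv_mul, one_le_div (by positivity)]
    exact Real.rpow_le_rpow_of_nonpos (by positivity) (by linarith) hγ0
  · refine le_trans ?_ le_add_self
    calc _ ≤ ∫⁻ x in Metric.ball (0 : Vd d) 1, ENNReal.ofReal (4 ^ (-γ) * (1 + ‖z‖) ^ γ) := by
          refine setLIntegral_mono measurable_const fun x hx => ENNReal.ofReal_le_ofReal ?_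
          rw [mem_ball_zero_iff] at hx
          have h1 : (1 + ‖z‖) / 4 ≤ ‖x - z‖ := by
            have := norm_sub_norm_le z x
            rw [norm_sub_rev] at this
            linarith
          have := Real.rpow_le_rpow_of_nonpos (by positivity) h1 hγ0
          rw [Real.div_rpow (by positivity) (by norm_num)] at this
          rw [Real.rpow_neg (by norm_num), ← div_eq_inv_mul]
          exact this
      _ = _ := by
          rw [setLIntegral_const, ENNReal.ofReal_mul (by positivity), hV]; ring

/-- Hölder's inequality on the unit scale; the dual exponent `q/(q-1)` makes the kernel decay
integrable. -/
lemma exists_unit_morrey {d : ℕ} (hd : 1 ≤ d) {γ q : ℝ} (hγ : -(d:ℝ) < γ) (hγ0 : γ ≤ 0)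
    (hq : 1 < q) (hq2 : q * (d + γ) < d) :
    ∃ C : ℝ≥0∞, C ≠ ⊤ ∧ ∀ G : Vd d → ℝ≥0∞, Measurable G →
      ∫⁻ x in Metric.ball (0 : Vd d) 1, pot γ G x ≤ C * (∫⁻ y, G y ^ q) ^ (1 / q) := by
  obtain ⟨C, hC, hJ⟩ := exists_ball_kernel_bound hd hγ hγ0
  have hpq : q.HolderConjugate (q / (q - 1)) := Real.HolderConjugate.conjExponent hq
  set p := q / (q - 1) with hp
  have hp0 : 0 < p := hpq.symm.pos
  have hdp : (d:ℝ) < -(γ * p) := by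
    have : 0 < q - 1 := by linarith
    rw [hp, mul_div_assoc', ← neg_div, lt_div_iff₀ this]
    nlinarith
  have hfin := finite_integral_one_add_norm (E := Vd d) (μ := volume) (r := -(γ * p))
    (by simpa using hdp)
  simp only [neg_neg] at hfin
  set T := ∫⁻ x : Vd d, ENNReal.ofReal ((1 + ‖x‖) ^ (γ * p)) with hT
  refine ⟨C * T ^ (1 / p), ENNReal.mul_ne_top hC
    (ENNReal.rpow_ne_top_of_nonneg (by positivity) hfin.ne), fun G hG => ?_⟩
  unfold pot
  rw [lintegral_lintegral_swap (by fun_prop)]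
  calc _ = ∫⁻ y, G y * ∫⁻ x in Metric.ball (0 : Vd d) 1, ENNReal.ofReal (‖x - y‖ ^ γ) := by
        refine lintegral_congr fun y => ?_
        rw [lintegral_mul_const _ (by fun_prop), mul_comm]
    _ ≤ ∫⁻ y, G y * (C * ENNReal.ofReal ((1 + ‖y‖) ^ γ)) := by
        gcongr with y; exact hJ y
    _ = C * ∫⁻ y, (G * (fun y => ENNReal.ofReal ((1 + ‖y‖) ^ γ) : Vd d → ℝ≥0∞)) y := by
        rw [← lintegral_const_mul _ (by fun_prop)]
        refine lintegral_congr fun y => ?_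
        simp only [Pi.mul_apply]; ring
    _ ≤ C * ((∫⁻ y, G y ^ q) ^ (1 / q) *
          (∫⁻ y, ENNReal.ofReal ((1 + ‖y‖) ^ γ) ^ p) ^ (1 / p)) := by
        gcongr
        exact ENNReal.lintegral_mul_le_Lp_mul_Lq _ hpq hG.aemeasurable (by fun_prop)
    _ = _ := by
        have : ∫⁻ y : Vd d, ENNReal.ofReal ((1 + ‖y‖) ^ γ) ^ p = T := by
          refine lintegral_congr fun y => ?_
          rw [ENNReal.ofReal_rpow_of_pos (by positivity), ← Real.rpow_mul (by positivity)]
        rw [this]; ring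

/-- Morrey bound for the potential of an `L^q` function, obtained from the unit scale by
scaling. -/
lemma exists_morrey {d : ℕ} (hd : 1 ≤ d) {γ q : ℝ} (hγ : -(d:ℝ) < γ) (hγ0 : γ ≤ 0)
    (hq : 1 < q) (hq2 : q * (d + γ) < d) :
    ∃ C : ℝ≥0∞, C ≠ ⊤ ∧ ∀ G : Vd d → ℝ≥0∞, Measurable G → ∀ (y₀ : Vd d) (r : ℝ), 0 < r →
      ∫⁻ x in Metric.ball y₀ r, pot γ G x ≤
        C * (∫⁻ y, G y ^ q) ^ (1 / q) * ENNReal.ofReal (r ^ (2 * d + γ - d / q)) := by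
  obtain ⟨C, hC, h⟩ := exists_unit_morrey hd hγ hγ0 hq hq2
  refine ⟨C, hC, fun G hG y₀ r hr => ?_⟩
  set G' : Vd d → ℝ≥0∞ := fun z => G (y₀ + r • z) with hG'
  have hG'm : Measurable G' := by fun_prop
  have hpot : ∀ x, pot γ G (y₀ + r • x) = ENNReal.ofReal (r ^ (d + γ)) * pot γ G' x := by
    intro x
    unfold pot
    rw [lintegral_affine (by fun_prop) y₀ hr, Real.rpow_add hr, Real.rpow_natCast,
      ENNReal.ofReal_mul (by positivity), mul_assoc]
    congr 1
    rw [← lintegral_const_mul _ (by fun_prop)]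
    refine lintegral_congr fun z => ?_
    rw [add_sub_add_left_eq_sub, ← smul_sub, norm_smul, Real.norm_of_nonneg hr.le,
      Real.mul_rpow hr.le (norm_nonneg _), ENNReal.ofReal_mul (by positivity), mul_assoc]
  have hN : ∫⁻ y, G y ^ q = ENNReal.ofReal (r ^ d) * ∫⁻ y, G' y ^ q :=
    lintegral_affine (by fun_prop) y₀ hr
  have hN' : (∫⁻ y, G y ^ q) ^ (1 / q) =
      ENNReal.ofReal (r ^ (d / q)) * (∫⁻ y, G' y ^ q) ^ (1 / q) := by
    rw [hN, ENNReal.mul_rpow_of_nonneg _ _ (by positivity),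
      ENNReal.ofReal_rpow_of_pos (by positivity), ← Real.rpow_natCast, ← Real.rpow_mul hr.le]
    congr 3; ring
  have hL : ∫⁻ x in Metric.ball y₀ r, pot γ G x =
      ENNReal.ofReal (r ^ d) * (ENNReal.ofReal (r ^ (d + γ)) *
        ∫⁻ x in Metric.ball (0 : Vd d) 1, pot γ G' x) := by
    rw [← lintegral_const_mul _ (measurable_pot γ hG'm), ← lintegral_indicator measurableSet_ball,
      lintegral_affine ((measurable_pot γ hG).indicator measurableSet_ball) y₀ hr,
      ← lintegral_indicator measurableSet_ball]
    congr 1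
    refine lintegral_congr fun x => ?_
    have : y₀ + r • x ∈ Metric.ball y₀ r ↔ x ∈ Metric.ball (0 : Vd d) 1 := by
      rw [mem_ball_iff_norm, add_sub_cancel_left, norm_smul, Real.norm_of_nonneg hr.le,
        mem_ball_zero_iff]
      constructor <;> intro h <;> nlinarith
    by_cases hx : x ∈ Metric.ball (0 : Vd d) 1
    · rw [Set.indicator_of_mem hx, Set.indicator_of_mem (this.2 hx), hpot]
    · rw [Set.indicator_of_notMem hx, Set.indicator_of_notMem (mt this.1 hx)]
  rw [hL, hN']
  calc _ ≤ ENNReal.ofReal (r ^ d) * (ENNReal.ofReal (r ^ (d + γ)) *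
        (C * (∫⁻ y, G' y ^ q) ^ (1 / q))) := by gcongr; exact h G' hG'm
    _ = (C * (∫⁻ y, G' y ^ q) ^ (1 / q)) * (ENNReal.ofReal (r ^ d) * ENNReal.ofReal (r ^ (d + γ))) := by
        ring
    _ = (C * (∫⁻ y, G' y ^ q) ^ (1 / q)) *
        (ENNReal.ofReal (r ^ (d / q)) * ENNReal.ofReal (r ^ (2 * d + γ - d / q))) := by
        rw [← ENNReal.ofReal_mul (by positivity), ← ENNReal.ofReal_mul (by positivity),
          ← Real.rpow_natCast r d, ← Real.rpow_add hr, ← Real.rpow_add hr]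
        congr 3; ring
    _ = _ := by ring

/-! ### Ball averages -/

lemma enorm_sq_eq_ofReal (x : ℝ) : ‖x‖ₑ ^ 2 = ENNReal.ofReal (x ^ 2) := by
  rw [Real.enorm_eq_ofReal_abs, ← ENNReal.ofReal_pow (abs_nonneg _), sq_abs]

/-- Telescoping followed by a Cauchy–Schwarz inequality with geometric weights. -/
lemma enorm_sq_le_of_tendsto {a : ℕ → ℝ} {L θ : ℝ} (ha : Tendsto a atTop (nhds L))
    (hθ0 : 0 < θ) (hθ1 : θ < 1) :
    ‖L‖ₑ ^ 2 ≤ 2 * ‖a 0‖ₑ ^ 2 + ENNReal.ofReal (2 / (1 - θ)) *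
      ∑' k, ENNReal.ofReal ((θ ^ k)⁻¹) * ‖a (k + 1) - a k‖ₑ ^ 2 := by
  have hlim : Tendsto (fun n => ENNReal.ofReal ((a n) ^ 2)) atTop
      (nhds (ENNReal.ofReal (L ^ 2))) :=
    (ENNReal.continuous_ofReal.tendsto _).comp (ha.pow 2)
  rw [enorm_sq_eq_ofReal L]
  refine le_of_tendsto' hlim fun n => ?_
  have hS : ∑ k ∈ Finset.range n, θ ^ k ≤ 1 / (1 - θ) := by
    rw [one_div, ← tsum_geometric_of_lt_one hθ0.le hθ1]
    exact (summable_geometric_of_lt_one hθ0.le hθ1).sum_le_tsum _ fun _ _ => by positivity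
  have hcs : (∑ k ∈ Finset.range n, (a (k + 1) - a k)) ^ 2 ≤
      (∑ k ∈ Finset.range n, θ ^ k) *
        ∑ k ∈ Finset.range n, (θ ^ k)⁻¹ * (a (k + 1) - a k) ^ 2 := by
    refine Finset.sum_sq_le_sum_mul_sum_of_sq_le_mul _ (fun _ _ => by positivity)
      (fun _ _ => by positivity) fun k _ => ?_
    exact (by rw [← mul_assoc, mul_inv_cancel₀ (by positivity), one_mul] : _ = _).le
  rw [Finset.sum_range_sub] at hcs
  have hpos : 0 ≤ ∑ k ∈ Finset.range n, (θ ^ k)⁻¹ * (a (k + 1) - a k) ^ 2 :=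
    Finset.sum_nonneg fun _ _ => by positivity
  have hmain : (a n) ^ 2 ≤ 2 * (a 0) ^ 2 + 2 / (1 - θ) *
      ∑ k ∈ Finset.range n, (θ ^ k)⁻¹ * (a (k + 1) - a k) ^ 2 := by
    have h1 := mul_le_mul_of_nonneg_right hS hpos
    have h2 : (a n) ^ 2 ≤ 2 * (a 0) ^ 2 + 2 * (a n - a 0) ^ 2 := by
      nlinarith [sq_nonneg (a n - 2 * a 0)]
    have h3 : 2 / (1 - θ) = 2 * (1 / (1 - θ)) := by ring
    rw [h3, mul_assoc]
    linarith
  refine (ENNReal.ofReal_le_ofReal hmain).trans ?_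
  have h1θ : 0 < 1 - θ := by linarith
  rw [ENNReal.ofReal_add (by positivity) (by positivity), ENNReal.ofReal_mul (by norm_num),
    ENNReal.ofReal_mul (by positivity), ← enorm_sq_eq_ofReal,
    ENNReal.ofReal_sum_of_nonneg fun _ _ => by positivity]
  simp only [ENNReal.ofReal_ofNat]
  gcongr
  refine le_trans (le_of_eq ?_) (ENNReal.sum_le_tsum (Finset.range n))
  refine Finset.sum_congr rfl fun k _ => ?_
  rw [ENNReal.ofReal_mul (by positivity), enorm_sq_eq_ofReal]

/-- Mean of `F` over the ball of centre `x` and radius `r`. -/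
def ballAvg {d : ℕ} (F : Vd d → ℝ) (r : ℝ) (x : Vd d) : ℝ := ⨍ y in Metric.ball x r, F y

lemma integrableOn_ball_of_continuous {d : ℕ} {F : Vd d → ℝ} (hF : Continuous F) (x : Vd d)
    (r : ℝ) : IntegrableOn F (Metric.ball x r) :=
  (hF.continuousOn.integrableOn_compact (isCompact_closedBall x r)).mono_set
    Metric.ball_subset_closedBall

/-- Jensen's inequality for the square. -/
lemma enorm_sub_ballAvg_sq_le {d : ℕ} {F : Vd d → ℝ} (hF : Continuous F) (c : ℝ) (x : Vd d)
    {r : ℝ} (hr : 0 < r) :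
    ‖c - ballAvg F r x‖ₑ ^ 2 ≤
      (volume (Metric.ball x r))⁻¹ * ∫⁻ y in Metric.ball x r, ‖c - F y‖ₑ ^ 2 := by
  set B := Metric.ball x r with hB
  have hB0 : volume B ≠ 0 := (Metric.measure_ball_pos _ _ hr).ne'
  have hBt : volume B ≠ ⊤ := measure_ball_lt_top.ne
  set μ : Measure (Vd d) := (volume B)⁻¹ • volume.restrict B with hμ
  have : IsProbabilityMeasure μ := ⟨by
    simp [hμ, ENNReal.inv_mul_cancel hB0 hBt]⟩
  have hFi : Integrable F μ :=
    (integrableOn_ball_of_continuous hF x r).smul_measure (ENNReal.inv_ne_top.2 hB0)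
  have h1 : c - ballAvg F r x = ∫ y, (c - F y) ∂μ := by
    rw [integral_sub (integrable_const _) hFi, ballAvg, average_eq']
    simp [hμ, hB]
  have h2 : ‖c - ballAvg F r x‖ₑ ≤ (∫⁻ y, ‖c - F y‖ₑ ^ (2:ℝ) ∂μ) ^ (1 / (2:ℝ)) := by
    rw [h1]
    refine (enorm_integral_le_lintegral_enorm _).trans ?_
    have hm : AEMeasurable (fun y => ‖c - F y‖ₑ) μ := by
      have := hF.measurable
      fun_prop
    have := ENNReal.lintegral_mul_le_Lp_mul_Lq μ Real.HolderConjugate.two_two hm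
      (aemeasurable_const (b := (1 : ℝ≥0∞)))
    simpa using this
  calc ‖c - ballAvg F r x‖ₑ ^ 2 ≤ ((∫⁻ y, ‖c - F y‖ₑ ^ (2:ℝ) ∂μ) ^ (1 / (2:ℝ))) ^ 2 := by gcongr
    _ = ∫⁻ y, ‖c - F y‖ₑ ^ 2 ∂μ := by
      rw [← ENNReal.rpow_natCast, ← ENNReal.rpow_mul]
      norm_num
    _ = _ := by rw [hμ, lintegral_smul_measure, smul_eq_mul]

lemma measurable_ballAvg {d : ℕ} {F : Vd d → ℝ} (hF : Continuous F) (r : ℝ) :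
    Measurable (ballAvg F r) := by
  have hS : MeasurableSet {p : Vd d × Vd d | dist p.2 p.1 < r} :=
    (isOpen_lt (by fun_prop) continuous_const).measurableSet
  have h : ballAvg F r = fun x => ((volume (Metric.ball (0 : Vd d) r)).toReal)⁻¹ *
      ∫ y, {p : Vd d × Vd d | dist p.2 p.1 < r}.indicator (fun p => F p.2) (x, y) := by
    ext x
    rw [ballAvg, setAverage_eq, smul_eq_mul, Measure.real, Measure.addHaar_ball_center,
      ← integral_indicator measurableSet_ball]
    rfl
  rw [h]
  refine Measurable.const_mul ?_ _
  exact (StronglyMeasurable.integral_prod_right'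
    ((hF.measurable.comp measurable_snd).indicator hS).stronglyMeasurable).measurable

lemma tendsto_ballAvg {d : ℕ} {F : Vd d → ℝ} (hF : Continuous F) (x : Vd d) {ρ : ℕ → ℝ}
    (hρ0 : ∀ k, 0 < ρ k) (hρ : Tendsto ρ atTop (nhds 0)) :
    Tendsto (fun k => ballAvg F (ρ k) x) atTop (nhds (F x)) := by
  rw [Metric.tendsto_nhds]
  intro e he
  obtain ⟨δ, hδ, hδF⟩ := Metric.continuousAt_iff.1 (hF.continuousAt (x := x)) (e / 2) (by positivity)
  filter_upwards [hρ.eventually (gt_mem_nhds hδ)] with k hk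
  have hball : ∀ y ∈ Metric.ball x (ρ k), ‖F x - F y‖ₑ ^ 2 ≤ ENNReal.ofReal ((e / 2) ^ 2) := by
    intro y hy
    rw [enorm_sq_eq_ofReal]
    refine ENNReal.ofReal_le_ofReal ?_
    have := (hδF ((Metric.mem_ball.1 hy).trans hk)).le
    rw [Real.dist_eq, abs_sub_comm] at this
    exact sq_le_sq' (by linarith [neg_abs_le (F x - F y)]) (by linarith [le_abs_self (F x - F y)])
  have h1 := enorm_sub_ballAvg_sq_le hF (F x) x (hρ0 k)
  have h2 : ‖F x - ballAvg F (ρ k) x‖ₑ ^ 2 ≤ ENNReal.ofReal ((e / 2) ^ 2) := by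
    refine h1.trans ?_
    calc _ ≤ (volume (Metric.ball x (ρ k)))⁻¹ *
          ∫⁻ y in Metric.ball x (ρ k), ENNReal.ofReal ((e / 2) ^ 2) := by
          gcongr 1
          exact setLIntegral_mono measurable_const hball
      _ = _ := by
          rw [setLIntegral_const, mul_comm, mul_assoc, ENNReal.mul_inv_cancel
            (Metric.measure_ball_pos _ _ (hρ0 k)).ne' measure_ball_lt_top.ne, mul_one]
  rw [enorm_sq_eq_ofReal, ENNReal.ofReal_le_ofReal_iff (by positivity)] at h2
  have h3 := abs_le_of_sq_le_sq h2 (by positivity)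
  rw [dist_comm, Real.dist_eq]
  linarith

/-- Integral over `h ∈ B(0, 2r)` of the squared increments of `F` at `b`. -/
def incr {d : ℕ} (F : Vd d → ℝ) (r : ℝ) (b : Vd d) : ℝ≥0∞ :=
  ∫⁻ h in Metric.ball (0 : Vd d) (2 * r), ‖F (b + h) - F b‖ₑ ^ 2

lemma measurable_incr {d : ℕ} {F : Vd d → ℝ} (hF : Continuous F) (r : ℝ) :
    Measurable (incr F r) := by
  have := hF.measurable
  unfold incr
  exact Measurable.lintegral_prod_right (by fun_prop)

/-- Two applications of Jensen's inequality bound the difference of the means by a double integral of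
`|F a - F b|²`; for `a ∈ B(x, r/2)` and `b ∈ B(x, r)` the increment `a - b` lies in `B(0, 2r)`. -/
lemma enorm_ballAvg_half_sub_sq_le {d : ℕ} {F : Vd d → ℝ} (hF : Continuous F) (x : Vd d)
    {r : ℝ} (hr : 0 < r) :
    ‖ballAvg F (r / 2) x - ballAvg F r x‖ₑ ^ 2 ≤
      (volume (Metric.ball x (r / 2)))⁻¹ * ((volume (Metric.ball x r))⁻¹ *
        ∫⁻ b in Metric.ball x r, incr F r b) := by
  have hm := hF.measurable
  rw [← enorm_neg, neg_sub]
  refine (enorm_sub_ballAvg_sq_le hF _ x (half_pos hr)).trans ?_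
  gcongr 1
  calc _ ≤ ∫⁻ a in Metric.ball x (r / 2), (volume (Metric.ball x r))⁻¹ *
        ∫⁻ b in Metric.ball x r, ‖F a - F b‖ₑ ^ 2 := by
        refine lintegral_mono fun a => ?_
        rw [← enorm_neg, neg_sub]
        exact enorm_sub_ballAvg_sq_le hF (F a) x hr
    _ = (volume (Metric.ball x r))⁻¹ *
        ∫⁻ b in Metric.ball x r, ∫⁻ a in Metric.ball x (r / 2), ‖F a - F b‖ₑ ^ 2 := by
        rw [lintegral_const_mul _ (Measurable.lintegral_prod_right (by fun_prop)),
          lintegral_lintegral_swap (by fun_prop)]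
    _ ≤ _ := by
        gcongr 1
        refine setLIntegral_mono (measurable_incr hF r) fun b hb => ?_
        have h1 : Metric.ball x (r / 2) ⊆ Metric.ball b (2 * r) := by
          refine Metric.ball_subset_ball' ?_
          have := Metric.mem_ball'.1 hb
          linarith
        refine (lintegral_mono_set h1).trans (le_of_eq ?_)
        rw [incr, ← lintegral_indicator measurableSet_ball, ← lintegral_indicator measurableSet_ball,
          ← lintegral_add_left_eq_self ((Metric.ball b (2 * r)).indicator _) b]
        refine lintegral_congr fun h => ?_
        have : b + h ∈ Metric.ball b (2 * r) ↔ h ∈ Metric.ball (0 : Vd d) (2 * r) := by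
          simp
        by_cases hh : h ∈ Metric.ball (0 : Vd d) (2 * r)
        · rw [Set.indicator_of_mem hh, Set.indicator_of_mem (this.2 hh)]
        · rw [Set.indicator_of_notMem hh, Set.indicator_of_notMem (mt this.1 hh)]

/-- Tonelli: only the mass of the weight on balls of radius `r` matters. -/
lemma lintegral_ball_mul_weight_le {d : ℕ} {E W : Vd d → ℝ≥0∞} (hE : Measurable E)
    (hW : Measurable W) {r : ℝ} {B : ℝ≥0∞} (hB : ∀ y, ∫⁻ x in Metric.ball y r, W x ≤ B) :
    ∫⁻ x, (∫⁻ b in Metric.ball x r, E b) * W x ≤ B * ∫⁻ b, E b := by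
  have hS : MeasurableSet {p : Vd d × Vd d | dist p.2 p.1 < r} :=
    (isOpen_lt (by fun_prop) continuous_const).measurableSet
  set f : Vd d × Vd d → ℝ≥0∞ :=
    {p : Vd d × Vd d | dist p.2 p.1 < r}.indicator (fun p => E p.2 * W p.1) with hf
  have hfm : Measurable f := Measurable.indicator (by fun_prop) hS
  have h1 : ∀ x, (∫⁻ b in Metric.ball x r, E b) * W x = ∫⁻ b, f (x, b) := by
    intro x
    rw [← lintegral_mul_const _ hE, ← lintegral_indicator measurableSet_ball]
    rfl
  have h2 : ∀ b, ∫⁻ x, f (x, b) = E b * ∫⁻ x in Metric.ball b r, W x := by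
    intro b
    rw [← lintegral_const_mul _ hW, ← lintegral_indicator measurableSet_ball]
    refine lintegral_congr fun x => ?_
    simp only [hf, Set.indicator, Set.mem_ofPred_eq, Metric.mem_ball, dist_comm]
  simp_rw [h1]
  rw [lintegral_lintegral_swap (by exact hfm.aemeasurable)]
  simp_rw [h2]
  rw [← lintegral_const_mul _ hE]
  refine lintegral_mono fun b => ?_
  rw [mul_comm]
  gcongr
  exact hB b

/-! ### Form bound for Morrey weights -/

lemma volume_ball_inv {d : ℕ} (x : Vd d) {r : ℝ} (hr : 0 < r) :
    (volume (Metric.ball x r))⁻¹ =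
      ENNReal.ofReal (r ^ (-(d:ℝ))) * (volume (Metric.ball (0 : Vd d) 1))⁻¹ := by
  rw [Measure.addHaar_ball_of_pos _ _ hr, finrank_euclideanSpace, Fintype.card_fin,
    ENNReal.mul_inv (Or.inr measure_ball_lt_top.ne) (Or.inl ENNReal.ofReal_ne_top),
    ← ENNReal.ofReal_inv_of_pos (by positivity), Real.rpow_neg hr.le, Real.rpow_natCast]

/-- The first term of the telescoping expansion, at the largest scale `r`. -/
lemma lintegral_ballAvg_sq_mul_le {d : ℕ} {ν : ℝ} {W : Vd d → ℝ≥0∞} {M : ℝ≥0∞} {F : Vd d → ℝ}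
    (hW : Measurable W) (hF : Continuous F) {r : ℝ} (hr : 0 < r)
    (hM : ∀ y, ∫⁻ x in Metric.ball y r, W x ≤ M * ENNReal.ofReal (r ^ ((d:ℝ) - 2 * ν))) :
    ∫⁻ x, ‖ballAvg F r x‖ₑ ^ 2 * W x ≤ (volume (Metric.ball (0 : Vd d) 1))⁻¹ * M *
      (ENNReal.ofReal (r ^ (-(2 * ν))) * ∫⁻ x, ‖F x‖ₑ ^ 2) := by
  set v := volume (Metric.ball (0 : Vd d) 1)
  have hm := hF.measurable
  calc _ ≤ ∫⁻ x, ENNReal.ofReal (r ^ (-(d:ℝ))) * v⁻¹ *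
        ((∫⁻ b in Metric.ball x r, ‖F b‖ₑ ^ 2) * W x) := by
        refine lintegral_mono fun x => ?_
        dsimp only
        rw [← mul_assoc]
        gcongr
        have := enorm_sub_ballAvg_sq_le hF 0 x hr
        simpa only [zero_sub, enorm_neg, volume_ball_inv x hr] using this
    _ = ENNReal.ofReal (r ^ (-(d:ℝ))) * v⁻¹ *
        ∫⁻ x, ((∫⁻ b in Metric.ball x r, ‖F b‖ₑ ^ 2) * W x) :=
        lintegral_const_mul' _ _ (ENNReal.mul_ne_top ENNReal.ofReal_ne_top
          (ENNReal.inv_ne_top.2 (Metric.measure_ball_pos _ _ one_pos).ne'))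
    _ ≤ ENNReal.ofReal (r ^ (-(d:ℝ))) * v⁻¹ *
        (M * ENNReal.ofReal (r ^ ((d:ℝ) - 2 * ν)) * ∫⁻ x, ‖F x‖ₑ ^ 2) := by
        gcongr
        exact lintegral_ball_mul_weight_le (by fun_prop) hW hM
    _ = v⁻¹ * M * (ENNReal.ofReal (r ^ (-(d:ℝ))) * ENNReal.ofReal (r ^ ((d:ℝ) - 2 * ν)) *
        ∫⁻ x, ‖F x‖ₑ ^ 2) := by ring
    _ = _ := by
        rw [← ENNReal.ofReal_mul (by positivity), ← Real.rpow_add hr]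
        congr 4; ring

lemma lintegral_incr_le {d : ℕ} {s : ℝ} {F : Vd d → ℝ} {H : ℝ≥0∞} (hs : 0 < s)
    (hF : Continuous F)
    (hH : ∀ h, ∫⁻ x, ‖F (x + h) - F x‖ₑ ^ 2 ≤ H * ENNReal.ofReal (‖h‖ ^ (2 * s)))
    {r : ℝ} (hr : 0 < r) :
    ∫⁻ b, incr F r b ≤ H * (ENNReal.ofReal ((2 * r) ^ (2 * s + d)) *
      volume (Metric.ball (0 : Vd d) 1)) := by
  have hm := hF.measurable
  unfold incr
  rw [lintegral_lintegral_swap (by fun_prop)]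
  calc _ ≤ ∫⁻ h in Metric.ball (0 : Vd d) (2 * r), H * ENNReal.ofReal ((2 * r) ^ (2 * s)) := by
        refine setLIntegral_mono measurable_const fun h hh => (hH h).trans ?_
        rw [mem_ball_zero_iff] at hh
        gcongr
    _ = _ := by
        rw [setLIntegral_const, Measure.addHaar_ball_of_pos _ _ (by positivity : 0 < 2 * r),
          finrank_euclideanSpace, Fintype.card_fin, Real.rpow_add (by positivity),
          ENNReal.ofReal_mul (by positivity), Real.rpow_natCast]
        ring

/-- One step of the telescoping expansion, from scale `r` to scale `r/2`: the bound carries the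
positive power `r^{2(s-ν)}`. -/
lemma lintegral_ballAvg_diff_sq_mul_le {d : ℕ} {s ν : ℝ} {W : Vd d → ℝ≥0∞} {M H : ℝ≥0∞}
    {F : Vd d → ℝ} (hs : 0 < s)
    (hW : Measurable W) (hF : Continuous F) {r : ℝ} (hr : 0 < r)
    (hM : ∀ y, ∫⁻ x in Metric.ball y r, W x ≤ M * ENNReal.ofReal (r ^ ((d:ℝ) - 2 * ν)))
    (hH : ∀ h, ∫⁻ x, ‖F (x + h) - F x‖ₑ ^ 2 ≤ H * ENNReal.ofReal (‖h‖ ^ (2 * s))) :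
    ∫⁻ x, ‖ballAvg F (r / 2) x - ballAvg F r x‖ₑ ^ 2 * W x ≤
      (volume (Metric.ball (0 : Vd d) 1))⁻¹ * M *
      (ENNReal.ofReal (2 ^ (2 * s + 2 * d)) * ENNReal.ofReal (r ^ (2 * (s - ν))) * H) := by
  set v := volume (Metric.ball (0 : Vd d) 1) with hv
  have hv0 : v ≠ 0 := (Metric.measure_ball_pos _ _ one_pos).ne'
  have hvt : v ≠ ⊤ := measure_ball_lt_top.ne
  have hm := hF.measurable
  set c := ENNReal.ofReal ((r / 2) ^ (-(d:ℝ))) * v⁻¹ * (ENNReal.ofReal (r ^ (-(d:ℝ))) * v⁻¹)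
    with hc
  have hct : c ≠ ⊤ := ENNReal.mul_ne_top
    (ENNReal.mul_ne_top ENNReal.ofReal_ne_top (ENNReal.inv_ne_top.2 hv0))
    (ENNReal.mul_ne_top ENNReal.ofReal_ne_top (ENNReal.inv_ne_top.2 hv0))
  calc _ ≤ ∫⁻ x, c * ((∫⁻ b in Metric.ball x r, incr F r b) * W x) := by
        refine lintegral_mono fun x => ?_
        dsimp only
        rw [← mul_assoc]
        gcongr
        have := enorm_ballAvg_half_sub_sq_le hF x hr
        rwa [volume_ball_inv x hr, volume_ball_inv x (half_pos hr), ← mul_assoc] at this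
    _ = c * ∫⁻ x, ((∫⁻ b in Metric.ball x r, incr F r b) * W x) :=
        lintegral_const_mul' _ _ hct
    _ ≤ c * (M * ENNReal.ofReal (r ^ ((d:ℝ) - 2 * ν)) * (H * (ENNReal.ofReal
          ((2 * r) ^ (2 * s + d)) * v))) := by
        gcongr
        exact (lintegral_ball_mul_weight_le (measurable_incr hF r) hW hM).trans
          (by gcongr; exact lintegral_incr_le hs hF hH hr)
    _ = v⁻¹ * M * (ENNReal.ofReal ((r / 2) ^ (-(d:ℝ))) * ENNReal.ofReal (r ^ (-(d:ℝ))) *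
          ENNReal.ofReal (r ^ ((d:ℝ) - 2 * ν)) * ENNReal.ofReal ((2 * r) ^ (2 * s + d)) * H) *
          (v⁻¹ * v) := by rw [hc]; ring
    _ = _ := by
        rw [ENNReal.inv_mul_cancel hv0 hvt, mul_one, ← ENNReal.ofReal_mul (by positivity),
          ← ENNReal.ofReal_mul (by positivity), ← ENNReal.ofReal_mul (by positivity),
          ← ENNReal.ofReal_mul (by positivity)]
        congr 3
        rw [Real.div_rpow hr.le (by norm_num), Real.mul_rpow (by norm_num) hr.le,
          Real.rpow_neg (by norm_num : (0:ℝ) ≤ 2), div_inv_eq_mul]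
        have e1 : (2:ℝ) ^ (2 * s + 2 * d) = 2 ^ (d:ℝ) * 2 ^ (2 * s + d) := by
          rw [← Real.rpow_add (by norm_num)]; congr 1; ring
        have e2 : r ^ (2 * (s - ν)) =
            r ^ (-(d:ℝ)) * r ^ (-(d:ℝ)) * r ^ ((d:ℝ) - 2 * ν) * r ^ (2 * s + d) := by
          rw [← Real.rpow_add hr, ← Real.rpow_add hr, ← Real.rpow_add hr]; congr 1; ring
        rw [e1, e2]; ring

/-- A weight satisfying a Morrey condition of order `d - 2ν` with `ν < s` is form-bounded, at every
scale `r`. The regularity of `F` enters only through the `L²` modulus of continuity `H |h|^{2s}`. -/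
lemma exists_weighted_bound {d : ℕ} {s ν : ℝ} (hs : 0 < s) (hν : ν < s) :
    ∃ K : ℝ≥0∞, K ≠ ⊤ ∧ ∀ (W : Vd d → ℝ≥0∞) (M H : ℝ≥0∞) (F : Vd d → ℝ), Measurable W →
      Continuous F →
      (∀ y r, 0 < r → ∫⁻ x in Metric.ball y r, W x ≤ M * ENNReal.ofReal (r ^ ((d:ℝ) - 2 * ν))) →
      (∀ h, ∫⁻ x, ‖F (x + h) - F x‖ₑ ^ 2 ≤ H * ENNReal.ofReal (‖h‖ ^ (2 * s))) →
      ∀ r, 0 < r → ∫⁻ x, ‖F x‖ₑ ^ 2 * W x ≤ K * M *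
        (ENNReal.ofReal (r ^ (2 * (s - ν))) * H +
          ENNReal.ofReal (r ^ (-(2 * ν))) * ∫⁻ x, ‖F x‖ₑ ^ 2) := by
  set v := volume (Metric.ball (0 : Vd d) 1) with hv
  have hv0 : v ≠ 0 := (Metric.measure_ball_pos _ _ one_pos).ne'
  have hvi : v⁻¹ ≠ ⊤ := ENNReal.inv_ne_top.2 hv0
  -- The `k`-th step costs `2^{-2k(s-ν)} = θ^{2k}`; half of this decay pays for the weights
  -- `θ^{-k}` of the Cauchy–Schwarz inequality, the other half makes the series converge.
  set θ : ℝ := 2 ^ (-(s - ν)) with hθ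
  have hθ0 : 0 < θ := by positivity
  have hθ1 : θ < 1 := Real.rpow_lt_one_of_one_lt_of_neg (by norm_num) (by linarith)
  set S : ℝ≥0∞ := ∑' k : ℕ, ENNReal.ofReal (θ ^ k) with hS
  have hSt : S ≠ ⊤ := by
    rw [hS, ← ENNReal.ofReal_tsum_of_nonneg (fun k => by positivity)
      (summable_geometric_of_lt_one hθ0.le hθ1)]
    exact ENNReal.ofReal_ne_top
  set a := ENNReal.ofReal (2 / (1 - θ)) with ha
  set b := ENNReal.ofReal (2 ^ (2 * s + 2 * d)) with hb
  refine ⟨2 * v⁻¹ + a * S * b * v⁻¹, by finiteness, ?_⟩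
  intro W M H F hW hF hM hH r hr
  set N := ∫⁻ x, ‖F x‖ₑ ^ 2 with hN
  set ρ : ℕ → ℝ := fun k => r * (1 / 2) ^ k with hρ
  have hρ0 : ∀ k, 0 < ρ k := fun k => by positivity
  have hρlim : Tendsto ρ atTop (nhds 0) := by
    have := (tendsto_pow_atTop_nhds_zero_of_lt_one (by norm_num : (0:ℝ) ≤ 1 / 2)
      (by norm_num)).const_mul r
    rw [mul_zero] at this
    exact this
  have hρs : ∀ k, ρ (k + 1) = ρ k / 2 := fun k => by simp only [hρ]; ring
  have hmA : ∀ k, Measurable (ballAvg F (ρ k)) := fun k => measurable_ballAvg hF (ρ k)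
  have hterm : ∀ k, ENNReal.ofReal ((θ ^ k)⁻¹) *
      ∫⁻ x, ‖ballAvg F (ρ (k + 1)) x - ballAvg F (ρ k) x‖ₑ ^ 2 * W x ≤
        v⁻¹ * M * (b * ENNReal.ofReal (r ^ (2 * (s - ν))) * H) * ENNReal.ofReal (θ ^ k) := by
    intro k
    rw [hρs]
    refine (mul_le_mul_right (lintegral_ballAvg_diff_sq_mul_le hs hW hF (hρ0 k)
      (fun y => hM y _ (hρ0 k)) hH) _).trans (le_of_eq ?_)
    have e : (ρ k) ^ (2 * (s - ν)) = r ^ (2 * (s - ν)) * (θ ^ k * θ ^ k) := by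
      simp only [hρ, hθ]
      rw [Real.mul_rpow hr.le (by positivity), ← Real.rpow_natCast, ← Real.rpow_natCast,
        ← Real.rpow_mul (by norm_num), ← Real.rpow_mul (by norm_num),
        ← Real.rpow_add (by norm_num), one_div, Real.inv_rpow (by norm_num),
        ← Real.rpow_neg (by norm_num)]
      congr 2; ring
    have e2 : ENNReal.ofReal ((θ ^ k)⁻¹) * ENNReal.ofReal ((ρ k) ^ (2 * (s - ν))) =
        ENNReal.ofReal (r ^ (2 * (s - ν))) * ENNReal.ofReal (θ ^ k) := by
      rw [← ENNReal.ofReal_mul (by positivity), ← ENNReal.ofReal_mul (by positivity), e]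
      congr 1
      field_simp
    calc _ = v⁻¹ * M * (b * (ENNReal.ofReal ((θ ^ k)⁻¹) *
          ENNReal.ofReal ((ρ k) ^ (2 * (s - ν)))) * H) := by ring
      _ = _ := by rw [e2]; ring
  have hpt : ∀ x, ‖F x‖ₑ ^ 2 * W x ≤ 2 * (‖ballAvg F r x‖ₑ ^ 2 * W x) +
      a * ∑' k, ENNReal.ofReal ((θ ^ k)⁻¹) *
        (‖ballAvg F (ρ (k + 1)) x - ballAvg F (ρ k) x‖ₑ ^ 2 * W x) := by
    intro x
    have h1 := enorm_sq_le_of_tendsto (tendsto_ballAvg hF x hρ0 hρlim) hθ0 hθ1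
    have h2 : ρ 0 = r := by simp [hρ]
    rw [h2] at h1
    refine (mul_le_mul_left h1 (W x)).trans (le_of_eq ?_)
    simp only [← mul_assoc, ENNReal.tsum_mul_right, add_mul]
    rfl
  have hmr := measurable_ballAvg hF r
  calc ∫⁻ x, ‖F x‖ₑ ^ 2 * W x
      ≤ ∫⁻ x, (2 * (‖ballAvg F r x‖ₑ ^ 2 * W x) +
        a * ∑' k, ENNReal.ofReal ((θ ^ k)⁻¹) *
          (‖ballAvg F (ρ (k + 1)) x - ballAvg F (ρ k) x‖ₑ ^ 2 * W x)) := lintegral_mono hpt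
    _ = 2 * (∫⁻ x, ‖ballAvg F r x‖ₑ ^ 2 * W x) + a * ∑' k, ENNReal.ofReal ((θ ^ k)⁻¹) *
          ∫⁻ x, ‖ballAvg F (ρ (k + 1)) x - ballAvg F (ρ k) x‖ₑ ^ 2 * W x := by
        rw [lintegral_add_left (by fun_prop), lintegral_const_mul _ (by fun_prop),
          lintegral_const_mul' _ _ ENNReal.ofReal_ne_top, lintegral_tsum (fun k => by fun_prop)]
        congr 3
        ext k
        rw [lintegral_const_mul' _ _ ENNReal.ofReal_ne_top]
    _ ≤ 2 * (v⁻¹ * M * (ENNReal.ofReal (r ^ (-(2 * ν))) * N)) +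
          a * ∑' k : ℕ, v⁻¹ * M * (b * ENNReal.ofReal (r ^ (2 * (s - ν))) * H) *
            ENNReal.ofReal (θ ^ k) := by
        refine add_le_add (mul_le_mul_right ?_ _)
          (mul_le_mul_right (ENNReal.tsum_le_tsum hterm) _)
        exact lintegral_ballAvg_sq_mul_le hW hF hr fun y => hM y r hr
    _ = 2 * v⁻¹ * M * (ENNReal.ofReal (r ^ (-(2 * ν))) * N) +
          a * S * b * v⁻¹ * M * (ENNReal.ofReal (r ^ (2 * (s - ν))) * H) := by
        rw [ENNReal.tsum_mul_left]; ring
    _ ≤ _ := by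
        rw [mul_add, add_mul, add_mul, add_comm]
        gcongr
        · exact le_add_self
        · exact le_self_add

/-! ### Weights and the choice of scale -/

lemma one_le_jap {d : ℕ} (v : Vd d) : 1 ≤ jap v := by
  rw [jap, Real.one_le_sqrt]; nlinarith [sq_nonneg ‖v‖]

lemma jap_pos {d : ℕ} (v : Vd d) : 0 < jap v := one_pos.trans_le (one_le_jap v)

@[fun_prop]
lemma measurable_jap {d : ℕ} : Measurable (jap : Vd d → ℝ) := by
  unfold jap; fun_prop

lemma jap_le_add {d : ℕ} (v y : Vd d) : jap v ≤ jap y + ‖v - y‖ := by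
  have h0 := jap_pos y
  have h1 : jap y ^ 2 = 1 + ‖y‖ ^ 2 := Real.sq_sqrt (by positivity)
  have h2 : ‖y‖ ≤ jap y := Real.le_sqrt_of_sq_le (by linarith)
  have h3 : ‖v‖ ≤ ‖y‖ + ‖v - y‖ := by
    have := norm_add_le y (v - y); rwa [add_sub_cancel] at this
  have h4 := norm_nonneg (v - y)
  rw [jap, Real.sqrt_le_iff]
  refine ⟨by positivity, ?_⟩
  have h5 : ‖v‖ ^ 2 ≤ (‖y‖ + ‖v - y‖) ^ 2 := by gcongr
  nlinarith

/-- Peetre-type splitting: for `|v - y| ≥ ⟨v⟩/2` the kernel is at most `2^|γ| ⟨v⟩^γ`, and otherwise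
`⟨v⟩ ≤ 2⟨y⟩`, so that the weight can be moved from `v` to `y`. -/
lemma kernel_le {d : ℕ} {γ : ℝ} (hγ : γ ≤ 0) (v y : Vd d) :
    ‖v - y‖ ^ γ ≤ 2 ^ |γ| * jap v ^ γ * (1 + ‖v - y‖ ^ γ * jap y ^ |γ|) := by
  have hv := jap_pos v
  have hy := jap_pos y
  rw [abs_of_nonpos hγ]
  have hn : 0 ≤ ‖v - y‖ ^ γ := by positivity
  rcases le_or_gt (jap v / 2) ‖v - y‖ with h | h
  · have h1 : ‖v - y‖ ^ γ ≤ (jap v / 2) ^ γ :=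
      Real.rpow_le_rpow_of_nonpos (by positivity) h hγ
    have h2 : (jap v / 2) ^ γ = 2 ^ (-γ) * jap v ^ γ := by
      rw [Real.div_rpow hv.le (by norm_num), Real.rpow_neg (by norm_num), div_eq_inv_mul]
    rw [h2] at h1
    refine h1.trans (le_mul_of_one_le_right (by positivity) ?_)
    have : 0 ≤ ‖v - y‖ ^ γ * jap y ^ (-γ) := by positivity
    linarith
  · have h1 : jap v ≤ 2 * jap y := by linarith [jap_le_add v y]
    have h2 : (2 * jap y) ^ γ ≤ jap v ^ γ := Real.rpow_le_rpow_of_nonpos hv h1 hγ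
    have h3 : 1 ≤ 2 ^ (-γ) * jap v ^ γ * jap y ^ (-γ) := by
      calc (1:ℝ) = (2 * jap y) ^ γ * (2 * jap y) ^ (-γ) := by
            rw [← Real.rpow_add (by positivity), add_neg_cancel, Real.rpow_zero]
        _ ≤ jap v ^ γ * (2 * jap y) ^ (-γ) := by gcongr
        _ = _ := by rw [Real.mul_rpow (by norm_num) hy.le]; ring
    have h4 : 0 ≤ 2 ^ (-γ) * jap v ^ γ := by positivity
    nlinarith

lemma exists_schwartz_jap_mul {d : ℕ} (a : ℝ) (φ : SchwartzMap (Vd d) ℝ) :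
    ∃ F : SchwartzMap (Vd d) ℝ, (F : Vd d → ℝ) = fun v => jap v ^ a * φ v := by
  refine ⟨SchwartzMap.smulLeftCLM ℝ (fun v : Vd d => (1 + ‖v‖ ^ 2) ^ (a / 2)) φ, ?_⟩
  ext v
  rw [SchwartzMap.smulLeftCLM_apply_apply
    (Function.hasTemperateGrowth_one_add_norm_sq_rpow (Vd d) (a / 2)), smul_eq_mul, jap,
    Real.sqrt_eq_rpow, ← Real.rpow_mul (by positivity)]
  congr 2; ring

/-- Transfer of the weight `⟨v⟩^γ` from the kernel to `φ²`. -/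
lemma lintegral_sq_mul_pot_le {d : ℕ} {γ : ℝ} (hγ : γ ≤ 0) {g : Vd d → ℝ} (hg : Measurable g)
    (φ : SchwartzMap (Vd d) ℝ) :
    ∫⁻ v, ‖φ v‖ₑ ^ 2 * pot γ (fun y => ENNReal.ofReal (g y)) v ≤
      ENNReal.ofReal (2 ^ |γ|) *
        ((∫⁻ v, ‖jap v ^ (γ / 2) * φ v‖ₑ ^ 2) * (∫⁻ y, ENNReal.ofReal (g y)) +
          ∫⁻ v, ‖jap v ^ (γ / 2) * φ v‖ₑ ^ 2 *
            pot γ (fun y => ENNReal.ofReal (jap y ^ |γ| * g y)) v) := by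
  have hφ := φ.continuous.measurable
  have hG : Measurable fun y => ENNReal.ofReal (jap y ^ |γ| * g y) := by fun_prop
  have hmp := measurable_pot γ hG
  rw [← lintegral_mul_const _ (by fun_prop), ← lintegral_add_left (by fun_prop),
    ← lintegral_const_mul _ (by fun_prop)]
  refine lintegral_mono fun v => ?_
  have hjv := jap_pos v
  have hF : ‖jap v ^ (γ / 2) * φ v‖ₑ ^ 2 = ENNReal.ofReal (jap v ^ γ) * ‖φ v‖ₑ ^ 2 := by
    rw [enorm_mul, mul_pow, Real.enorm_eq_ofReal (by positivity), ← ENNReal.ofReal_pow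
      (by positivity), ← Real.rpow_natCast, ← Real.rpow_mul hjv.le]
    congr 3; push_cast; ring
  dsimp only
  rw [hF, ← mul_add]
  have h1 : pot γ (fun y => ENNReal.ofReal (g y)) v ≤ ENNReal.ofReal (2 ^ |γ|) *
      ENNReal.ofReal (jap v ^ γ) * ((∫⁻ y, ENNReal.ofReal (g y)) +
        pot γ (fun y => ENNReal.ofReal (jap y ^ |γ| * g y)) v) := by
    unfold pot
    rw [← lintegral_add_left (by fun_prop), ← lintegral_const_mul _ (by fun_prop)]
    refine lintegral_mono fun y => ?_
    have hjy := jap_pos y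
    have h2 := ENNReal.ofReal_le_ofReal (kernel_le hγ v y)
    rw [ENNReal.ofReal_mul (by positivity), ENNReal.ofReal_mul (by positivity),
      ENNReal.ofReal_add (by positivity) (by positivity), ENNReal.ofReal_one,
      ENNReal.ofReal_mul (by positivity)] at h2
    dsimp only
    rw [ENNReal.ofReal_mul (by positivity : 0 ≤ jap y ^ |γ|)]
    refine (mul_le_mul_left h2 _).trans (le_of_eq ?_)
    ring
  calc _ ≤ ‖φ v‖ₑ ^ 2 * _ := mul_le_mul_right h1 _
    _ = _ := by ring

/-- No integrability is needed: a junk value `0` of either Bochner integral only helps. -/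
lemma ofReal_integral_sq_mul_cop_le {d : ℕ} {γ : ℝ} {g : Vd d → ℝ} (hg0 : ∀ v, 0 ≤ g v)
    (φ : Vd d → ℝ) :
    ENNReal.ofReal (∫ v, φ v ^ 2 * cop γ g v) ≤
      ∫⁻ v, ‖φ v‖ₑ ^ 2 * pot γ (fun y => ENNReal.ofReal (g y)) v := by
  have h1 : ∀ v, ‖cop γ g v‖ₑ ≤ pot γ (fun y => ENNReal.ofReal (g y)) v := by
    intro v
    refine (enorm_integral_le_lintegral_enorm _).trans (le_of_eq (lintegral_congr fun y => ?_))
    rw [enorm_mul, Real.enorm_eq_ofReal (by positivity), Real.enorm_eq_ofReal (hg0 y)]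
  refine (ENNReal.ofReal_le_ofReal (le_abs_self _)).trans ?_
  rw [← Real.norm_eq_abs, ofReal_norm]
  refine (enorm_integral_le_lintegral_enorm _).trans (lintegral_mono fun v => ?_)
  rw [enorm_mul, enorm_pow]
  exact mul_le_mul_right (h1 v) _

lemma sobSemiSq_nonneg {d : ℕ} (s : ℝ) (f : Vd d → ℝ) : 0 ≤ sobSemiSq s f :=
  integral_nonneg fun ξ => by positivity

/-- The inequality before optimisation in the scale `r`. -/
lemma exists_scale_bound {d : ℕ} (hd : 1 ≤ d) {s γ q ν : ℝ} (hs : 0 < s) (hs1 : s ≤ 1)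
    (hγ : -(d:ℝ) < γ) (hγ0 : γ ≤ 0) (hq : 1 < q) (hq2 : q * (d + γ) < d) (hνs : ν < s)
    (hexp : 2 * (d:ℝ) + γ - d / q = d - 2 * ν) :
    ∃ K > 0, ∀ (g : Vd d → ℝ) (φ : SchwartzMap (Vd d) ℝ),
      (∀ v, 0 ≤ g v) → Measurable g → Integrable g →
      Integrable (fun v => (jap v ^ |γ| * g v) ^ q) → ∀ r > 0,
      (∫ v, (φ v) ^ 2 * cop γ g v) ≤ 2 ^ |γ| * wLp 1 0 g * (∫ v, (φ v) ^ 2 * jap v ^ γ) +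
        K * wLp q 0 (fun v => jap v ^ |γ| * g v) *
          (r ^ (2 * (s - ν)) * sobSemiSq s (fun v => jap v ^ (γ / 2) * φ v) +
            r ^ (-(2 * ν)) * ∫ v, (φ v) ^ 2 * jap v ^ γ) := by
  obtain ⟨C, hC, hCb⟩ := exists_morrey hd hγ hγ0 hq hq2
  obtain ⟨K, hK, hKb⟩ := exists_weighted_bound (d := d) hs hνs
  -- The factor `4` is the one of `lintegral_translate_sub_le`; the summand `1` ensures positivity.
  refine ⟨2 ^ |γ| * (K.toReal * C.toReal) * 4 + 1, by positivity, ?_⟩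
  intro g φ hg0 hgm hgi hGi r hr
  obtain ⟨F, hF⟩ := exists_schwartz_jap_mul (γ / 2) φ
  rw [← hF]
  set Φ := ∫ v, (φ v) ^ 2 * jap v ^ γ with hΦ
  set G : Vd d → ℝ := fun v => jap v ^ |γ| * g v with hG
  have hG0 : ∀ v, 0 ≤ G v := fun v => mul_nonneg (Real.rpow_nonneg (jap_pos v).le _) (hg0 v)
  have hGm : Measurable G := by fun_prop
  have hS := sobSemiSq_nonneg s F
  have hΦ0 : 0 ≤ Φ := integral_nonneg fun v =>
    mul_nonneg (sq_nonneg _) (Real.rpow_nonneg (jap_pos v).le _)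
  have eg : ∫⁻ y, ENNReal.ofReal (g y) = ENNReal.ofReal (wLp 1 0 g) := by
    rw [← ofReal_integral_eq_lintegral_ofReal hgi (Filter.Eventually.of_forall hg0), wLp]
    simp [abs_of_nonneg (hg0 _)]
  have eF : ∫⁻ v, ‖F v‖ₑ ^ 2 = ENNReal.ofReal Φ := by
    have hFsq : ∀ v, ‖F v‖ ^ 2 = (φ v) ^ 2 * jap v ^ γ := by
      intro v
      rw [hF, Real.norm_eq_abs, sq_abs, mul_pow, ← Real.rpow_natCast (jap v ^ _),
        ← Real.rpow_mul (jap_pos v).le, mul_comm]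
      congr 2; push_cast; ring
    have hint : Integrable (fun v => ‖F v‖ ^ 2) := by
      simpa using (F.memLp 2 volume).integrable_norm_pow (by norm_num)
    simp only [hΦ, ← hFsq]
    rw [ofReal_integral_eq_lintegral_ofReal hint
      (Filter.Eventually.of_forall fun v => by positivity)]
    refine lintegral_congr fun v => ?_
    rw [ENNReal.ofReal_pow (norm_nonneg _), ofReal_norm]
  have hN0 : 0 ≤ wLp q 0 G := Real.rpow_nonneg (integral_nonneg fun v =>
    mul_nonneg (Real.rpow_nonneg (abs_nonneg _) _) (Real.rpow_nonneg (jap_pos v).le _)) _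
  have hg1 : 0 ≤ wLp 1 0 g := Real.rpow_nonneg (integral_nonneg fun v =>
    mul_nonneg (Real.rpow_nonneg (abs_nonneg _) _) (Real.rpow_nonneg (jap_pos v).le _)) _
  have eG : (∫⁻ y, ENNReal.ofReal (G y) ^ q) ^ (1 / q) = ENNReal.ofReal (wLp q 0 G) := by
    have h1 : ∀ y, ENNReal.ofReal (G y) ^ q = ENNReal.ofReal (G y ^ q) := fun y =>
      ENNReal.ofReal_rpow_of_nonneg (hG0 y) (by linarith)
    simp only [h1]
    rw [← ofReal_integral_eq_lintegral_ofReal hGi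
      (Filter.Eventually.of_forall fun v => Real.rpow_nonneg (hG0 v) _),
      ENNReal.ofReal_rpow_of_nonneg (integral_nonneg fun v => Real.rpow_nonneg (hG0 v) _)
        (by positivity), wLp]
    simp only [abs_of_nonneg (hG0 _), Real.rpow_zero, mul_one]
  have hM : ∀ (y : Vd d) (r : ℝ), 0 < r →
      ∫⁻ x in Metric.ball y r, pot γ (fun y => ENNReal.ofReal (G y)) x ≤
        C * ENNReal.ofReal (wLp q 0 G) * ENNReal.ofReal (r ^ ((d:ℝ) - 2 * ν)) := by
    intro y r hr
    have := hCb (fun y => ENNReal.ofReal (G y)) (by fun_prop) y r hr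
    rwa [eG, hexp] at this
  have hW := hKb (pot γ fun y => ENNReal.ofReal (G y)) _ _ F (measurable_pot γ (by fun_prop))
    F.continuous hM (lintegral_translate_sub_le hs hs1 F) r hr
  have h1 := (ofReal_integral_sq_mul_cop_le (γ := γ) hg0 φ).trans
    (lintegral_sq_mul_pot_le hγ0 hgm φ)
  have hFv : ∀ v, jap v ^ (γ / 2) * φ v = F v := fun v => by rw [hF]
  simp only [hFv] at h1
  rw [eF, eg] at h1
  have h2 := h1.trans (mul_le_mul_right (add_le_add_right hW _) _)
  rw [eF, ← ENNReal.ofReal_toReal hK, ← ENNReal.ofReal_toReal hC,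
    ← ENNReal.ofReal_mul (by positivity), ← ENNReal.ofReal_mul (by positivity),
    ← ENNReal.ofReal_mul (by positivity), ← ENNReal.ofReal_mul (by positivity),
    ← ENNReal.ofReal_mul (by positivity),
    ← ENNReal.ofReal_add (by positivity) (by positivity), ← ENNReal.ofReal_mul (by positivity),
    ← ENNReal.ofReal_add (by positivity) (by positivity), ← ENNReal.ofReal_mul (by positivity),
    ENNReal.ofReal_le_ofReal_iff (by positivity)] at h2
  refine h2.trans ?_
  set N := wLp q 0 G
  set S := sobSemiSq s F
  have hr1 : 0 ≤ r ^ (2 * (s - ν)) * S := by positivity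
  have hr2 : 0 ≤ r ^ (-(2 * ν)) * Φ := by positivity
  have hk : 0 ≤ 2 ^ |γ| * (K.toReal * C.toReal) := by positivity
  nlinarith [mul_nonneg hN0 hr1, mul_nonneg hN0 hr2, mul_nonneg hk (mul_nonneg hN0 hr2)]

/-- Choice of the scale: `r` is taken so that `K N r^{2(s-ν)} = ε`. -/
lemma optimize_scale {s ν : ℝ} (hνs : ν < s) {a K X g N S Φ ε : ℝ}
    (ha : 0 < a) (hK : 0 < K) (hg : 0 ≤ g) (hN : 0 ≤ N) (hS : 0 ≤ S) (hΦ : 0 ≤ Φ) (hε : 0 < ε)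
    (h : ∀ r > 0, X ≤ a * g * Φ + K * N * (r ^ (2 * (s - ν)) * S + r ^ (-(2 * ν)) * Φ)) :
    X ≤ ε * S + max a (K ^ (s / (s - ν))) *
      (g + ε ^ (-ν / (s - ν)) * N ^ (s / (s - ν))) * Φ := by
  have hd : 0 < s - ν := sub_pos.2 hνs
  have hm1 := le_max_left a (K ^ (s / (s - ν)))
  have hm2 := le_max_right a (K ^ (s / (s - ν)))
  have hgΦ : a * (g * Φ) ≤ max a (K ^ (s / (s - ν))) * (g * Φ) := by gcongr
  have hP : 0 ≤ ε ^ (-ν / (s - ν)) * N ^ (s / (s - ν)) * Φ := by positivity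
  have hPm : K ^ (s / (s - ν)) * (ε ^ (-ν / (s - ν)) * N ^ (s / (s - ν)) * Φ) ≤
      max a (K ^ (s / (s - ν))) * (ε ^ (-ν / (s - ν)) * N ^ (s / (s - ν)) * Φ) := by gcongr
  rcases hN.eq_or_lt with h0 | h0
  · have h1 := h 1 one_pos
    rw [← h0, mul_zero, zero_mul] at h1
    rw [← h0] at hPm hP ⊢
    have : 0 ≤ ε * S := by positivity
    have : 0 ≤ K ^ (s / (s - ν)) := by positivity
    nlinarith
  · have hKN : 0 < K * N := by positivity
    have h1 := h ((ε / (K * N)) ^ (1 / (2 * (s - ν)))) (by positivity)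
    have e1 : K * N * ((ε / (K * N)) ^ (1 / (2 * (s - ν)))) ^ (2 * (s - ν)) = ε := by
      rw [← Real.rpow_mul (by positivity), one_div_mul_cancel (by positivity), Real.rpow_one]
      field_simp
    have e2 : K * N * ((ε / (K * N)) ^ (1 / (2 * (s - ν)))) ^ (-(2 * ν)) =
        K ^ (s / (s - ν)) * (ε ^ (-ν / (s - ν)) * N ^ (s / (s - ν))) := by
      have e3 : 1 / (2 * (s - ν)) * -(2 * ν) = -ν / (s - ν) := by field_simp
      have e4 : s / (s - ν) = 1 + -(-ν / (s - ν)) := by field_simp; ring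
      rw [← Real.rpow_mul (by positivity), e3, Real.div_rpow hε.le hKN.le, div_eq_mul_inv,
        ← Real.rpow_neg hKN.le]
      calc _ = ε ^ (-ν / (s - ν)) * ((K * N) ^ (1:ℝ) * (K * N) ^ (-(-ν / (s - ν)))) := by
            rw [Real.rpow_one]; ring
        _ = ε ^ (-ν / (s - ν)) * (K * N) ^ (s / (s - ν)) := by
            rw [← Real.rpow_add hKN, ← e4]
        _ = _ := by rw [Real.mul_rpow hK.le hN]; ring
    rw [mul_add, ← mul_assoc, ← mul_assoc (K * N), e1, e2] at h1
    linarith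

/-- Fractional ε-Poincaré inequality. -/
theorem fractional_eps_Poincare
    (d : ℕ) (hd : 2 ≤ d) (s γ : ℝ)
    (hs : 0 < s) (hs1 : s ≤ 1) (hγl : -(d : ℝ) < γ + 2*s) (hγu : γ + 2*s ≤ 0)
    (q : ℝ) (hq1 : (d : ℝ) / ((d : ℝ) + 2*s + γ) < q) (hq2 : q < (d : ℝ) / ((d : ℝ) + γ))
    (ν : ℝ) (hν : ν = ((d : ℝ) - q * ((d : ℝ) + γ)) / (2*q)) :
    ∃ C₀ > 0, ∀ ε > 0, ∀ (g : Vd d → ℝ) (φ : SchwartzMap (Vd d) ℝ),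
      (∀ v, 0 ≤ g v) → Measurable g → Integrable g →
      Integrable (fun v => (jap v ^ |γ| * g v) ^ q) →
      (∫ v, (φ v) ^ 2 * cop γ g v) ≤
        ε * sobSemiSq s (fun v => jap v ^ (γ/2) * φ v)
        + C₀ * (wLp 1 0 g
            + ε ^ (-ν/(s - ν)) * wLp q 0 (fun v => jap v ^ |γ| * g v) ^ (s/(s - ν)))
          * ∫ v, (φ v) ^ 2 * jap v ^ γ := by
  have hd' : (2:ℝ) ≤ d := by exact_mod_cast hd
  have hγ0 : γ ≤ 0 := by linarith
  have hD : 0 < (d:ℝ) + 2 * s + γ := by linarith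
  have hq : 1 < q := lt_of_le_of_lt ((one_le_div hD).2 (by linarith)) hq1
  -- In the remaining case `d/(d+γ)` is nonpositive, or the junk value `0`.
  have hγd : 0 < (d:ℝ) + γ := by
    by_contra hc
    have := div_nonpos_of_nonneg_of_nonpos (by linarith : (0:ℝ) ≤ d) (not_lt.1 hc)
    linarith
  have hq2' : q * (d + γ) < d := (lt_div_iff₀ hγd).1 hq2
  have hq1' : (d:ℝ) < q * (d + 2 * s + γ) := (div_lt_iff₀ hD).1 hq1
  have hq0 : 0 < q := by linarith
  have hνs : ν < s := by
    rw [hν, div_lt_iff₀ (by positivity)]; linarith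
  have hexp : 2 * (d:ℝ) + γ - d / q = d - 2 * ν := by
    rw [hν]; field_simp; ring
  obtain ⟨K, hK, hKb⟩ := exists_scale_bound (d := d) (by omega) hs hs1 (by linarith) hγ0 hq hq2'
    hνs hexp
  refine ⟨max (2 ^ |γ|) (K ^ (s / (s - ν))), by positivity, ?_⟩
  intro ε hε g φ hg0 hgm hgi hGi
  have hw : ∀ p (f : Vd d → ℝ), 0 ≤ wLp p 0 f := fun p f => Real.rpow_nonneg
    (integral_nonneg fun v =>
      mul_nonneg (Real.rpow_nonneg (abs_nonneg _) _) (Real.rpow_nonneg (jap_pos v).le _)) _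
  exact optimize_scale hνs (by positivity) hK (hw 1 g) (hw q _) (sobSemiSq_nonneg s _)
    (integral_nonneg fun v => mul_nonneg (sq_nonneg _) (Real.rpow_nonneg (jap_pos v).le _)) hε
    (hKb g φ hg0 hgm hgi hGi)
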